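/- arXiv:2505.23779 — 2 statements merged into one kernel-verified Lean document; each statement's English description precedes it below -/
import Mathlib

section
/- For every real u with 3 ≤ u < 4 one has (1 + log(u − 1))/u + (1/u) · ∫₂^{u−1} (log(t − 1)/t) dt ≥ 0.5607. -/
/-- Polynomial lower bound for `log (1 + x)` on `[0, 1]`. -/
lemma buchstab_log_lower (x : ℝ) (hx0 : 0 ≤ x) :
    (1/2 + x/4 - 3/8*x^2 + 205/664*x^3 - 193/1494*x^4) * (x + 2) - 1 ≤ Real.log (1 + x) := by
  let K : ℝ → ℝ := fun x => Real.log (1 + x) -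
    ((1/2 + x/4 - 3/8*x^2 + 205/664*x^3 - 193/1494*x^4) * (x + 2) - 1)
  have hd : ∀ y : ℝ, 0 ≤ y → HasDerivAt K
      (y^2 * (y-1/2)^2 * (4/9) * (1 + 965/664*(y+1)) / (1 + y)) y := by
    intro y hy
    have h1 : HasDerivAt (fun x : ℝ => 1 + x) 1 y := (hasDerivAt_id y).const_add 1
    have h2 := h1.log (by positivity)
    have h3 : HasDerivAt (fun x : ℝ =>
        1/2 + x/4 - 3/8*x^2 + 205/664*x^3 - 193/1494*x^4)
        (1/4 - 3/8*(2*y) + 205/664*(3*y^2) - 193/1494*(4*y^3)) y := by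
      have e1 := (hasDerivAt_id y).div_const 4
      have e2 := (hasDerivAt_pow 2 y).const_mul (3/8 : ℝ)
      have e3 := (hasDerivAt_pow 3 y).const_mul (205/664 : ℝ)
      have e4 := (hasDerivAt_pow 4 y).const_mul (193/1494 : ℝ)
      have := (((e1.const_add (1/2)).sub e2).add e3).sub e4
      refine HasDerivAt.congr_deriv (f := fun x : ℝ =>
        1/2 + x/4 - 3/8*x^2 + 205/664*x^3 - 193/1494*x^4) this ?_
      norm_num
    have h4 : HasDerivAt (fun x : ℝ => x + 2) 1 y := (hasDerivAt_id y).add_const 2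
    have h5 := h2.sub ((h3.mul h4).sub_const 1)
    refine HasDerivAt.congr_deriv (f := K) h5 ?_
    have : (1 + y) ≠ 0 := by positivity
    field_simp
    ring
  have hm : MonotoneOn K (Set.Ici 0) := by
    apply monotoneOn_of_deriv_nonneg (convex_Ici 0)
    · intro y hy
      exact (hd y hy).continuousAt.continuousWithinAt
    · intro y hy
      rw [interior_Ici] at hy
      exact (hd y (le_of_lt hy)).differentiableAt.differentiableWithinAt
    · intro y hy
      rw [interior_Ici] at hy
      have hy' : 0 < y := hy
      rw [(hd y hy'.le).deriv]
      positivity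
  have := hm (Set.mem_Ici.2 le_rfl) (Set.mem_Ici.2 hx0) hx0
  simp only [K] at this
  norm_num at this
  linarith

/-- The final polynomial is positive on `[0, 1]`. -/
lemma buchstab_poly_pos (x : ℝ) (hx0 : 0 ≤ x) (hx1 : x ≤ 1) :
    0 ≤ 0.0110471803 - 0.0607*x + x^2/8 - x^3/8 + 205/2656*x^4 - 193/7470*x^5 := by
  have h : 0 ≤ (x - 0.47)^2 * (0.0489 - 0.0668*x + 0.0529*x^2 - 193/7470*x^3) := by
    apply mul_nonneg (sq_nonneg _)
    nlinarith [mul_nonneg hx0 (sub_nonneg.2 hx1), mul_nonneg (mul_nonneg hx0 hx0) (sub_nonneg.2 hx1), sq_nonneg (x-1)]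
  nlinarith [mul_nonneg hx0 (sub_nonneg.2 hx1), mul_nonneg (mul_nonneg hx0 hx0) (sub_nonneg.2 hx1), pow_nonneg hx0 3, pow_nonneg hx0 4]

/-- Lower bound for the Buchstab function on `[3, 4)`:
`(1 + log(u-1))/u + (1/u) ∫₂^{u-1} log(t-1)/t dt ≥ 0.5607`. -/
theorem buchstab_lower_bound_on_three_four (u : ℝ) (h3 : 3 ≤ u) (h4 : u < 4) :
    0.5607 ≤ (1 + Real.log (u - 1)) / u +
      (1 / u) * ∫ t in (2 : ℝ)..(u - 1), Real.log (t - 1) / t := by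
  have hu : (2:ℝ) ≤ u - 1 := by linarith
  let A : ℝ → ℝ := fun t => (t-2)/2 + (t-2)^2/8 - (t-2)^3/8 + 205/2656*(t-2)^4
    - 193/7470*(t-2)^5 - Real.log t
  let p : ℝ → ℝ := fun t => 1/2 + (t-2)/4 - 3/8*(t-2)^2 + 205/664*(t-2)^3
    - 193/1494*(t-2)^4 - 1/t
  have hA : ∀ t ∈ Set.uIcc 2 (u-1), HasDerivAt A (p t) t := by
    intro t ht
    rw [Set.uIcc_of_le hu] at ht
    have ht0 : t ≠ 0 := by linarith [ht.1]
    have e0 : HasDerivAt (fun t : ℝ => t - 2) 1 t := (hasDerivAt_id t).sub_const 2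
    have e1 := e0.div_const 2
    have e2 := (e0.pow 2).div_const 8
    have e3 := (e0.pow 3).div_const 8
    have e4 := (e0.pow 4).const_mul (205/2656 : ℝ)
    have e5 := (e0.pow 5).const_mul (193/7470 : ℝ)
    have := ((((e1.add e2).sub e3).add e4).sub e5).sub (Real.hasDerivAt_log ht0)
    refine HasDerivAt.congr_deriv (f := A) this ?_
    simp only [p]
    push_cast
    ring
  have hpc : ContinuousOn p (Set.uIcc 2 (u-1)) := by
    rw [Set.uIcc_of_le hu]
    intro t ht
    have ht0 : t ≠ 0 := by linarith [ht.1]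
    apply ContinuousAt.continuousWithinAt
    simp only [p]
    fun_prop (disch := assumption)
  have hfc : ContinuousOn (fun t : ℝ => Real.log (t-1)/t) (Set.uIcc 2 (u-1)) := by
    rw [Set.uIcc_of_le hu]
    intro t ht
    have ht0 : t ≠ 0 := by linarith [ht.1]
    have ht1 : t - 1 ≠ 0 := by linarith [ht.1]
    apply ContinuousAt.continuousWithinAt
    fun_prop (disch := assumption)
  have hint := intervalIntegral.integral_eq_sub_of_hasDerivAt hA hpc.intervalIntegrable
  have hmono : ∫ t in (2:ℝ)..(u-1), p t ≤ ∫ t in (2:ℝ)..(u-1), Real.log (t-1)/t := by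
    apply intervalIntegral.integral_mono_on hu hpc.intervalIntegrable hfc.intervalIntegrable
    intro t ht
    have ht0 : 0 < t := by linarith [ht.1]
    have := buchstab_log_lower (t-2) (by linarith [ht.1])
    rw [show 1 + (t-2) = t-1 by ring] at this
    rw [le_div_iff₀ ht0]
    refine le_trans (le_of_eq ?_) this
    simp only [p]
    field_simp
    ring
  have hpoly := buchstab_poly_pos (u-1-2) (by linarith) (by linarith)
  have hlog := Real.log_two_gt_d9
  rw [hint] at hmono
  simp only [A] at hmono
  have hu0 : 0 < u := by linarith
  rw [one_div_mul_eq_div, ← add_div, le_div_iff₀ hu0]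
  norm_num at hmono hpoly hlog ⊢
  linarith
end

section
/- For every real u with 3 ≤ u < 4 one has (1 + log(u − 1))/u + (1/u) · ∫₂^{u−1} (log(t − 1)/t) dt ≤ 0.5644. -/
lemma aux_int (a b : ℝ) (ha : 2 ≤ a) (hab : a ≤ b) :
    IntervalIntegrable (fun t : ℝ => Real.log (t - 1) / t) MeasureTheory.volume a b := by
  apply ContinuousOn.intervalIntegrable
  rw [Set.uIcc_of_le hab]
  apply ContinuousOn.div
  · apply ContinuousOn.log (by fun_prop)
    intro x hx
    have := hx.1
    linarith
  · fun_prop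
  · intro x hx
    have := hx.1
    linarith

lemma aux_inv (a b : ℝ) (ha : 2 ≤ a) (hab : a ≤ b) :
    IntervalIntegrable (fun t : ℝ => t⁻¹) MeasureTheory.volume a b := by
  apply ContinuousOn.intervalIntegrable
  rw [Set.uIcc_of_le hab]
  apply ContinuousOn.inv₀ (by fun_prop)
  intro x hx
  have := hx.1
  linarith

lemma aux_step (a b k : ℝ) (ha : 2 ≤ a) (hab : a ≤ b)
    (h : ∀ t, a ≤ t → t ≤ b → 1 + Real.log (t - 1) ≤ k * t) :
    Real.log b + ∫ t in (2 : ℝ)..b, Real.log (t - 1) / t ≤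
      Real.log a + (∫ t in (2 : ℝ)..a, Real.log (t - 1) / t) + k * (b - a) := by
  have h1 := intervalIntegral.integral_add_adjacent_intervals
    (aux_int 2 a le_rfl ha) (aux_int a b ha hab)
  have h2 : ∫ t in a..b, t⁻¹ = Real.log b - Real.log a := by
    rw [integral_inv_of_pos (by linarith) (by linarith), Real.log_div (by linarith) (by linarith)]
  have h3 := intervalIntegral.integral_add (aux_inv a b ha hab) (aux_int a b ha hab)
  have h4 : ∫ t in a..b, (t⁻¹ + Real.log (t - 1) / t) ≤ ∫ _t in a..b, k := by
    apply intervalIntegral.integral_mono_on hab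
      ((aux_inv a b ha hab).add (aux_int a b ha hab)) intervalIntegrable_const
    intro t ht
    have ht0 : 0 < t := by linarith [ht.1]
    rw [inv_eq_one_div, ← add_div, div_le_iff₀ ht0]
    exact h t ht.1 ht.2
  rw [intervalIntegral.integral_const, smul_eq_mul] at h4
  linarith

lemma aux_tan (a x : ℝ) (ha : 0 < a) (hx : 0 < x) : Real.log x ≤ Real.log a + (x / a - 1) := by
  have := Real.log_le_sub_one_of_pos (div_pos hx ha)
  rw [Real.log_div hx.ne' ha.ne'] at this
  linarith

lemma aux_log1 : Real.log (7 / 5) ≤ 0.3366 := by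
  have h := aux_tan 2 ((7 / 5) ^ 2) (by norm_num) (by norm_num)
  rw [Real.log_pow] at h
  have := Real.log_two_lt_d9
  norm_num at h this ⊢
  linarith

lemma aux_log2 : Real.log (7 / 4) ≤ 0.56 := by
  have h := aux_tan 2 ((5 / 4) ^ 3) (by norm_num) (by norm_num)
  rw [Real.log_pow] at h
  have h1 := aux_log1
  have h2 : Real.log (7 / 4) = Real.log (7 / 5) + Real.log (5 / 4) := by
    rw [← Real.log_mul (by norm_num) (by norm_num)]
    norm_num
  have := Real.log_two_lt_d9
  norm_num at h h1 this ⊢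
  linarith

/-- Upper bound for the Buchstab function on `[3, 4)`:
`(1 + log(u-1))/u + (1/u) ∫₂^{u-1} log(t-1)/t dt ≤ 0.5644`. -/
theorem buchstab_upper_bound_on_three_four (u : ℝ) (h3 : 3 ≤ u) (h4 : u < 4) :
    (1 + Real.log (u - 1)) / u +
      (1 / u) * ∫ t in (2 : ℝ)..(u - 1), Real.log (t - 1) / t ≤ 0.5644 := by
  have hu : 0 < u := by linarith
  have hl2 := Real.log_two_lt_d9
  have hA : ∀ b : ℝ, 2 ≤ b → b ≤ 2.4 →
      Real.log b + ∫ t in (2 : ℝ)..b, Real.log (t - 1) / t ≤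
        Real.log 2 + 0.5574 * (b - 2) := by
    intro b hb hb'
    have := aux_step 2 b 0.5574 le_rfl hb (by
      intro t h1 h2
      have := aux_tan (7 / 5) (t - 1) (by norm_num) (by linarith)
      have := aux_log1
      norm_num at *
      linarith)
    rw [intervalIntegral.integral_same] at this
    linarith
  have key : Real.log (u - 1) + ∫ t in (2 : ℝ)..(u - 1), Real.log (t - 1) / t ≤
      0.5644 * u - 1 := by
    rcases le_total (u - 1) 2.4 with h | h
    · have := hA (u - 1) (by linarith) h
      norm_num at *
      linarith
    · have e1 := hA 2.4 (by norm_num) le_rfl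
      have e2 := aux_step 2.4 (u - 1) 0.568 (by norm_num) h (by
        intro t h1 h2
        have := aux_tan (7 / 4) (t - 1) (by norm_num) (by norm_num at h1; linarith)
        have := aux_log2
        norm_num at *
        linarith)
      norm_num at *
      linarith
  have e : (1 + Real.log (u - 1)) / u +
      (1 / u) * ∫ t in (2 : ℝ)..(u - 1), Real.log (t - 1) / t =
      (1 + (Real.log (u - 1) + ∫ t in (2 : ℝ)..(u - 1), Real.log (t - 1) / t)) / u := by
    ring
  rw [e, div_le_iff₀ hu]
  linarith
end
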